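/- Let τ = i/√2, so that 2τ² + 1 = 0, and set t = ( η(τ)·η(6τ) / (η(2τ)·η(3τ)) )⁶, where η is the Dedekind eta function. Then t + 1/t = 10. -/

import Mathlib

/-!
Put `q = e^{2πiτ}`, a real number in `(0, 1)`, and write `b(q) = ∏ (1 - qⁿ)` over odd `n`. Since
`η(τ) / η(2τ)` is `q^{-1/24} b(q)`, the quantity in question is `t = q^{1/2} (b(q) / b(q³))⁶`, which is
real and positive. Two facts determine it.

* *Inversion.* As `-1 / τ = 2τ`, the transformation law of `η` at `τ` gives `b(q)²⁴ = 64 q`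
  (`dedekindEta_neg_inv_pow`).
* *The modular equation of degree three.* The numbers `b = b(q)` and `B = b(q³)` satisfy
  `q² b²⁴ + B²⁴ = (bB)¹⁸ + 18 q (bB)¹² + 64 q² (bB)⁶` (`modular_equation`).

Substituting the first into the second leaves `(t² - 10 t + 1) (t + 1)² = 0` (`real_value`), and `t > 0`
forces `t + 1/t = 10`.

The modular equation follows from two theta identities, `θ₃⁴ = θ₄⁴ + θ₂⁴` (`theta_quartic`) and
`θ₃(q) θ₃(q³) - θ₄(q) θ₄(q³) = θ₂(q) θ₂(q³)` (`theta_cubic`), both proved by rearranging sums over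
`ℤ²`; the second one uses the units of the Eisenstein integers. The Jacobi triple product
(`jacobi_triple_product`), itself a limit of its finite form (`finite_jacobi`), turns them into
polynomial relations between infinite products, from which all products but `b` and `B` are
eliminated.
-/

open scoped Real

/-- The Dedekind eta function `η(τ) = e^{πiτ/12}·∏_{n≥1}(1 - e^{2πinτ})`. -/
noncomputable def dedekindEta (τ : ℂ) : ℂ :=
  Complex.exp (π * Complex.I * τ / 12) *
    ∏' n : ℕ, (1 - Complex.exp (2 * π * Complex.I * (n + 1) * τ))

/-! ### The finite Jacobi triple product -/

/-- The reciprocal `1 / ((1 - x) (1 - x²) ⋯ (1 - xᵐ))` of the `q`-Pochhammer symbol, extended by `0`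
to negative `m`. With this convention the recursion `qPochInv_pred` holds for every integer `m`,
so that finite sums of Gaussian binomials can be written over all of `ℤ`. -/
noncomputable def qPochInv (x : ℝ) (m : ℤ) : ℝ :=
  if m < 0 then 0 else (∏ k ∈ Finset.range m.toNat, (1 - x ^ (k + 1)))⁻¹

lemma one_sub_pow_pos {x : ℝ} (hx0 : 0 < x) (hx1 : x < 1) (k : ℕ) : 0 < 1 - x ^ (k + 1) :=
  sub_pos.2 (pow_lt_one₀ hx0.le hx1 (Nat.succ_ne_zero k))

lemma qPochInv_pred {x : ℝ} (hx0 : 0 < x) (hx1 : x < 1) (m : ℤ) :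
    qPochInv x (m - 1) = (1 - x ^ m) * qPochInv x m := by
  rcases lt_trichotomy m 0 with h | rfl | h
  · simp [qPochInv, h, show m - 1 < 0 by omega]
  · simp [qPochInv]
  · obtain ⟨k, rfl⟩ : ∃ k : ℕ, m = k + 1 := ⟨(m - 1).toNat, by omega⟩
    have h2 : ((k : ℤ) + 1).toNat = k + 1 := by omega
    have h3 := (one_sub_pow_pos hx0 hx1 k).ne'
    have h4 : ∏ k ∈ Finset.range k, (1 - x ^ (k + 1)) ≠ 0 :=
      Finset.prod_ne_zero_iff.2 fun i _ => (one_sub_pow_pos hx0 hx1 i).ne'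
    have h5 : x ^ ((k : ℤ) + 1) = x ^ (k + 1) := by exact_mod_cast zpow_natCast x (k + 1)
    rw [qPochInv, qPochInv, if_neg (by omega), if_neg (by omega), h2, Finset.prod_range_succ, h5]
    simp only [add_sub_cancel_right, Int.toNat_natCast]
    field_simp

lemma qPochInv_nonneg {x : ℝ} (hx0 : 0 < x) (hx1 : x < 1) (m : ℤ) : 0 ≤ qPochInv x m := by
  unfold qPochInv
  split_ifs
  · rfl
  · exact inv_nonneg.2 (Finset.prod_nonneg fun i _ => (one_sub_pow_pos hx0 hx1 i).le)

/-- The finite form of the Jacobi triple product: the coefficient of `q ^ j² z ^ j` is the Gaussian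
binomial `[2n choose n + j]` in base `q²`. The induction step multiplies by
`(1 + q ^ (2n+1) z) (1 + q ^ (2n+1) z⁻¹)` and compares coefficients. -/
lemma finite_jacobi {q z : ℝ} (hq0 : 0 < q) (hq1 : q < 1) (hz : z ≠ 0) (n : ℕ) :
    HasSum (fun j : ℤ => (∏ k ∈ Finset.range (2 * n), (1 - (q ^ 2) ^ (k + 1))) *
        (qPochInv (q ^ 2) (n + j) * qPochInv (q ^ 2) (n - j)) * (q ^ (j ^ 2) * z ^ j))
      (∏ k ∈ Finset.range n, ((1 + q ^ (2 * k + 1) * z) * (1 + q ^ (2 * k + 1) * z⁻¹))) := by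
  have hx0 : 0 < q ^ 2 := by positivity
  have hx1 : q ^ 2 < 1 := pow_lt_one₀ hq0.le hq1 two_ne_zero
  induction n with
  | zero =>
    convert! hasSum_ite_eq (0 : ℤ) (1 : ℝ) using 2 with j
    split_ifs with h
    · simp [h, qPochInv]
    · rcases lt_or_gt_of_ne h with h | h
      · simp [qPochInv, h]
      · simp [qPochInv, h]
  | succ n ih =>
    rw [Finset.prod_range_succ]
    set P := ∏ k ∈ Finset.range n, ((1 + q ^ (2 * k + 1) * z) * (1 + q ^ (2 * k + 1) * z⁻¹))
    have h1 := (Equiv.subRight (1 : ℤ)).hasSum_iff.2 ih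
    have h2 := (Equiv.addRight (1 : ℤ)).hasSum_iff.2 ih
    have h3 := ((ih.mul_left (1 + q ^ (4 * n + 2))).add
      (h1.mul_left (q ^ (2 * n + 1) * z))).add (h2.mul_left (q ^ (2 * n + 1) * z⁻¹))
    convert! h3 using 1
    · funext j
      simp only [Function.comp_apply, Equiv.subRight_apply, Equiv.coe_addRight]
      rw [show 2 * (n + 1) = 2 * n + 1 + 1 by ring, Finset.prod_range_succ, Finset.prod_range_succ]
      set D := ∏ k ∈ Finset.range (2 * n), (1 - (q ^ 2) ^ (k + 1))
      -- By `qPochInv_pred`, every term of the recursion is a polynomial multiple of `A * B`.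
      set A := qPochInv (q ^ 2) (n + 1 + j) with hA
      set B := qPochInv (q ^ 2) (n + 1 - j) with hB
      have a1 : qPochInv (q ^ 2) (n + j) = (1 - (q ^ 2) ^ ((n : ℤ) + 1 + j)) * A := by
        rw [hA, ← qPochInv_pred hx0 hx1]; congr 1; ring
      have b1 : qPochInv (q ^ 2) (n - j) = (1 - (q ^ 2) ^ ((n : ℤ) + 1 - j)) * B := by
        rw [hB, ← qPochInv_pred hx0 hx1]; congr 1; ring
      have a2 : qPochInv (q ^ 2) (n + (j - 1)) = (1 - (q ^ 2) ^ ((n : ℤ) + j)) *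
          ((1 - (q ^ 2) ^ ((n : ℤ) + 1 + j)) * A) := by
        rw [← a1, ← qPochInv_pred hx0 hx1]; congr 1; ring
      have b2 : qPochInv (q ^ 2) (n - (j + 1)) = (1 - (q ^ 2) ^ ((n : ℤ) - j)) *
          ((1 - (q ^ 2) ^ ((n : ℤ) + 1 - j)) * B) := by
        rw [← b1, ← qPochInv_pred hx0 hx1]; congr 1; ring
      have a3 : qPochInv (q ^ 2) (n + (j + 1)) = A := by rw [hA]; congr 1; ring
      have b3 : qPochInv (q ^ 2) (n - (j - 1)) = B := by rw [hB]; congr 1; ring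
      have hA' : qPochInv (q ^ 2) (((n + 1 : ℕ) : ℤ) + j) = A := by rw [hA]; push_cast; rfl
      have hB' : qPochInv (q ^ 2) (((n + 1 : ℕ) : ℤ) - j) = B := by rw [hB]; push_cast; rfl
      rw [hA', hB', a1, b1, a2, b2, a3, b3]
      have hq : q ≠ 0 := hq0.ne'
      have hsq : (q ^ 2) ^ j = (q ^ j) ^ 2 := by
        rw [← zpow_natCast q 2, zpow_comm, zpow_natCast]
      have e1 : (q ^ 2) ^ ((n : ℤ) + 1 + j) = (q ^ n) ^ 2 * q ^ 2 * (q ^ j) ^ 2 := by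
        rw [zpow_add₀ hx0.ne', zpow_add₀ hx0.ne', zpow_natCast, zpow_one, hsq]
        ring
      have e2 : (q ^ 2) ^ ((n : ℤ) + 1 - j) = (q ^ n) ^ 2 * q ^ 2 * ((q ^ j)⁻¹) ^ 2 := by
        rw [zpow_sub₀ hx0.ne', zpow_add₀ hx0.ne', zpow_natCast, zpow_one, hsq]
        ring
      have e3 : (q ^ 2) ^ ((n : ℤ) + j) = (q ^ n) ^ 2 * (q ^ j) ^ 2 := by
        rw [zpow_add₀ hx0.ne', zpow_natCast, hsq]
        ring
      have e4 : (q ^ 2) ^ ((n : ℤ) - j) = (q ^ n) ^ 2 * ((q ^ j)⁻¹) ^ 2 := by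
        rw [zpow_sub₀ hx0.ne', zpow_natCast, hsq]
        ring
      have e5 : q ^ ((j - 1) ^ 2) = q ^ (j ^ 2) * ((q ^ j)⁻¹) ^ 2 * q := by
        rw [show (j - 1) ^ 2 = j ^ 2 - j - j + 1 by ring, zpow_add₀ hq, zpow_sub₀ hq, zpow_sub₀ hq,
          zpow_one]
        field_simp
      have e6 : q ^ ((j + 1) ^ 2) = q ^ (j ^ 2) * (q ^ j) ^ 2 * q := by
        rw [show (j + 1) ^ 2 = j ^ 2 + j + j + 1 by ring, zpow_add₀ hq, zpow_add₀ hq, zpow_add₀ hq,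
          zpow_one]
        ring
      rw [e1, e2, e3, e4, e5, e6, zpow_sub_one₀ hz, zpow_add_one₀ hz]
      have hj : q ^ j ≠ 0 := zpow_ne_zero _ hq
      have e7 : q ^ (4 * n + 2) = (q ^ n) ^ 4 * q ^ 2 := by ring
      have e8 : q ^ (2 * n + 1) = (q ^ n) ^ 2 * q := by ring
      have e9 : (q ^ 2) ^ (2 * n + 1) = (q ^ n) ^ 4 * q ^ 2 := by ring
      have e10 : (q ^ 2) ^ (2 * n + 1 + 1) = (q ^ n) ^ 4 * q ^ 4 := by ring
      rw [e7, e8, e9, e10]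
      generalize q ^ n = N at *
      generalize q ^ j = Y at *
      field_simp
      ring
    · field_simp
      ring

/-! ### The Jacobi triple product -/

open Filter Topology

/-- Euler's product `∏ (1 - xⁿ)` over `n ≥ 1`. -/
noncomputable def eulerProd (x : ℝ) : ℝ := ∏' k : ℕ, (1 - x ^ (k + 1))

lemma multipliable_of_geom {q : ℝ} (hq0 : 0 < q) (hq1 : q < 1) (c : ℝ) (g : ℕ → ℕ)
    (hg : ∀ k, k ≤ g k) : Multipliable fun k : ℕ => 1 + c * q ^ g k := by
  apply multipliable_one_add_of_summable
  refine Summable.of_nonneg_of_le (fun k => norm_nonneg _) (fun k => ?_)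
    ((summable_geometric_of_lt_one hq0.le hq1).mul_left |c|)
  rw [norm_mul, Real.norm_eq_abs, Real.norm_of_nonneg (by positivity)]
  exact mul_le_mul_of_nonneg_left (pow_le_pow_of_le_one hq0.le hq1.le (hg k)) (abs_nonneg c)

lemma multipliable_eulerProd {x : ℝ} (hx0 : 0 < x) (hx1 : x < 1) :
    Multipliable fun k : ℕ => 1 - x ^ (k + 1) := by
  simpa [sub_eq_add_neg] using multipliable_of_geom hx0 hx1 (-1) (fun k => k + 1) (fun k => by omega)

lemma tendsto_eulerProd {x : ℝ} (hx0 : 0 < x) (hx1 : x < 1) :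
    Tendsto (fun n => ∏ k ∈ Finset.range n, (1 - x ^ (k + 1))) atTop (𝓝 (eulerProd x)) :=
  (multipliable_eulerProd hx0 hx1).tendsto_prod_tprod_nat

lemma eulerProd_le {x : ℝ} (hx0 : 0 < x) (hx1 : x < 1) (n : ℕ) :
    eulerProd x ≤ ∏ k ∈ Finset.range n, (1 - x ^ (k + 1)) := by
  refine Antitone.le_of_tendsto (antitone_nat_of_succ_le fun m => ?_) (tendsto_eulerProd hx0 hx1) n
  rw [Finset.prod_range_succ]
  refine mul_le_of_le_one_right
    (Finset.prod_nonneg fun i _ => (one_sub_pow_pos hx0 hx1 i).le) ?_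
  have : 0 < x ^ (m + 1) := by positivity
  linarith

lemma eulerProd_pos {x : ℝ} (hx0 : 0 < x) (hx1 : x < 1) : 0 < eulerProd x := by
  refine lt_of_le_of_ne ?_ (Ne.symm ?_)
  · exact ge_of_tendsto' (tendsto_eulerProd hx0 hx1) fun n =>
      Finset.prod_nonneg fun i _ => (one_sub_pow_pos hx0 hx1 i).le
  · have := tprod_one_add_ne_zero_of_summable (f := fun k : ℕ => -x ^ (k + 1))
      (fun i => by simpa [← sub_eq_add_neg] using (one_sub_pow_pos hx0 hx1 i).ne')
      (by simpa [abs_of_pos hx0] using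
        (summable_nat_add_iff 1).2 (summable_geometric_of_lt_one hx0.le hx1))
    simpa [eulerProd, sub_eq_add_neg] using this

lemma qPochInv_le {x : ℝ} (hx0 : 0 < x) (hx1 : x < 1) (m : ℤ) :
    qPochInv x m ≤ (eulerProd x)⁻¹ := by
  have h := eulerProd_pos hx0 hx1
  unfold qPochInv
  split_ifs
  · positivity
  · exact inv_anti₀ h (eulerProd_le hx0 hx1 _)

lemma tendsto_qPochInv {x : ℝ} (hx0 : 0 < x) (hx1 : x < 1) :
    Tendsto (qPochInv x) atTop (𝓝 (eulerProd x)⁻¹) := by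
  have h1 : Tendsto (fun m : ℤ => m.toNat) atTop atTop :=
    tendsto_atTop.2 fun b => (eventually_ge_atTop (b : ℤ)).mono fun m hm => by omega
  refine (((tendsto_eulerProd hx0 hx1).comp h1).inv₀ (eulerProd_pos hx0 hx1).ne').congr' ?_
  filter_upwards [eventually_ge_atTop (0 : ℤ)] with m hm
  simp [qPochInv, not_lt.2 hm]

/-- The Jacobi triple product for real `0 < q < 1`, obtained from `finite_jacobi` as `n → ∞` by
dominated convergence of the series. -/
theorem jacobi_triple_product {q z : ℝ} (hq0 : 0 < q) (hq1 : q < 1) (hz : z ≠ 0)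
    (hs : Summable fun j : ℤ => q ^ (j ^ 2) * z ^ j) :
    ∑' j : ℤ, q ^ (j ^ 2) * z ^ j = eulerProd (q ^ 2) *
      ((∏' k : ℕ, (1 + q ^ (2 * k + 1) * z)) * ∏' k : ℕ, (1 + q ^ (2 * k + 1) * z⁻¹)) := by
  have hx0 : 0 < q ^ 2 := by positivity
  have hx1 : q ^ 2 < 1 := pow_lt_one₀ hq0.le hq1 two_ne_zero
  have hE := eulerProd_pos hx0 hx1
  set E := eulerProd (q ^ 2) with hEdef
  have m1 : ∀ c : ℝ, Multipliable fun k : ℕ => 1 + q ^ (2 * k + 1) * c := fun c => by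
    simpa only [mul_comm c] using
      multipliable_of_geom hq0 hq1 c (fun k => 2 * k + 1) (fun k => by omega)
  have hP := ((m1 z).mul (m1 z⁻¹)).tendsto_prod_tprod_nat
  rw [(m1 z).tprod_mul (m1 z⁻¹)] at hP
  have hT := tendsto_tsum_of_dominated_convergence (𝓕 := (atTop : Filter ℕ))
    (f := fun n (j : ℤ) => (∏ k ∈ Finset.range (2 * n), (1 - (q ^ 2) ^ (k + 1))) *
        (qPochInv (q ^ 2) (n + j) * qPochInv (q ^ 2) (n - j)) * (q ^ (j ^ 2) * z ^ j))
    (g := fun j : ℤ => E * (E⁻¹ * E⁻¹) * (q ^ (j ^ 2) * z ^ j))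
    (bound := fun j : ℤ => 1 * (E⁻¹ * E⁻¹) * ‖q ^ (j ^ 2) * z ^ j‖)
    (hs.norm.mul_left _) ?_ ?_
  · have hfin := fun n => (finite_jacobi hq0 hq1 hz n).tsum_eq
    simp only [hfin] at hT
    have := tendsto_nhds_unique hT hP
    rw [tsum_mul_left] at this
    rw [← this]
    field_simp
  · intro j
    refine Tendsto.mul_const _ (Tendsto.mul ?_ (Tendsto.mul ?_ ?_))
    · exact (tendsto_eulerProd hx0 hx1).comp (tendsto_id.const_mul_atTop' (by norm_num))
    · exact (tendsto_qPochInv hx0 hx1).comp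
        (tendsto_atTop_add_const_right _ j tendsto_natCast_atTop_atTop)
    · exact (tendsto_qPochInv hx0 hx1).comp
        (tendsto_atTop_add_const_right _ (-j) tendsto_natCast_atTop_atTop)
  · refine Eventually.of_forall fun n j => ?_
    have p0 := qPochInv_nonneg hx0 hx1
    have p1 := qPochInv_le hx0 hx1
    have d0 : 0 ≤ ∏ k ∈ Finset.range (2 * n), (1 - (q ^ 2) ^ (k + 1)) :=
      Finset.prod_nonneg fun i _ => (one_sub_pow_pos hx0 hx1 i).le
    have d1 : ∏ k ∈ Finset.range (2 * n), (1 - (q ^ 2) ^ (k + 1)) ≤ 1 :=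
      Finset.prod_le_one (fun i _ => (one_sub_pow_pos hx0 hx1 i).le) fun i _ => by
        have : 0 < (q ^ 2) ^ (i + 1) := by positivity
        linarith
    rw [norm_mul, Real.norm_of_nonneg (mul_nonneg d0 (mul_nonneg (p0 _) (p0 _)))]
    refine mul_le_mul_of_nonneg_right ?_ (norm_nonneg _)
    exact mul_le_mul d1 (mul_le_mul (p1 _) (p1 _) (p0 _) (by positivity))
      (mul_nonneg (p0 _) (p0 _)) zero_le_one

/-! ### Theta constants and their lattice identities -/

/-- Jacobi's theta constant `θ₃(q) = ∑ q ^ n²` over `n ∈ ℤ`. -/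
noncomputable def theta3 (q : ℝ) : ℝ := ∑' n : ℤ, q ^ (n ^ 2)

/-- Jacobi's theta constant `θ₄(q) = ∑ (-1)ⁿ q ^ n²` over `n ∈ ℤ`. -/
noncomputable def theta4 (q : ℝ) : ℝ := ∑' n : ℤ, q ^ (n ^ 2) * (-1) ^ n

/-- The series `∑ q ^ (n² + n)` over `n ∈ ℤ`, which is `q ^ (-1/4) θ₂(q)`. -/
noncomputable def psi (q : ℝ) : ℝ := ∑' n : ℤ, q ^ (n ^ 2 + n)

lemma summable_zpow_of_le {q : ℝ} (hq0 : 0 < q) (hq1 : q < 1) (g : ℤ → ℤ)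
    (hg : ∀ n, |n| - 1 ≤ g n) : Summable fun n : ℤ => q ^ g n := by
  have h : Summable fun n : ℤ => q⁻¹ * q ^ n.natAbs := by
    refine Summable.mul_left _ (Summable.of_nat_of_neg ?_ ?_) <;>
      simpa using summable_geometric_of_lt_one hq0.le hq1
  refine Summable.of_nonneg_of_le (fun n => by positivity) (fun n => ?_) h
  calc q ^ g n ≤ q ^ (|n| - 1) := zpow_le_zpow_right_of_le_one₀ hq0 hq1.le (hg n)
    _ = q⁻¹ * q ^ n.natAbs := by
      rw [zpow_sub₀ hq0.ne', Int.abs_eq_natAbs, zpow_natCast, zpow_one]; ring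

lemma summable_theta3 {q : ℝ} (hq0 : 0 < q) (hq1 : q < 1) : Summable fun n : ℤ => q ^ (n ^ 2) :=
  summable_zpow_of_le hq0 hq1 _ fun n => by
    rcases abs_cases n with h | h <;> nlinarith

lemma summable_psi {q : ℝ} (hq0 : 0 < q) (hq1 : q < 1) : Summable fun n : ℤ => q ^ (n ^ 2 + n) :=
  summable_zpow_of_le hq0 hq1 _ fun n => by
    rcases abs_cases n with h | h <;> nlinarith

lemma norm_theta4_term {q : ℝ} (hq0 : 0 < q) (n : ℤ) :
    ‖q ^ (n ^ 2) * (-1 : ℝ) ^ n‖ = q ^ (n ^ 2) := by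
  rw [norm_mul, norm_zpow, norm_zpow, norm_neg, norm_one, one_zpow, mul_one,
    Real.norm_of_nonneg hq0.le]

lemma summable_theta4 {q : ℝ} (hq0 : 0 < q) (hq1 : q < 1) :
    Summable fun n : ℤ => q ^ (n ^ 2) * (-1 : ℝ) ^ n :=
  Summable.of_norm ((summable_theta3 hq0 hq1).congr fun n => (norm_theta4_term hq0 n).symm)

/-- A sum over `(m, n) ∈ ℤ²` splits according to the parity of `m - n`. -/
lemma tsum_parity {F : ℤ × ℤ → ℝ} (hF : Summable F) :
    ∑' p, F p = ∑' p : ℤ × ℤ, F (p.2 + 2 * p.1, p.2) + ∑' p : ℤ × ℤ, F (p.2 + 2 * p.1 + 1, p.2) := by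
  have i0 : Function.Injective fun p : ℤ × ℤ => (p.2 + 2 * p.1, p.2) := by
    rintro ⟨a, b⟩ ⟨c, d⟩ h
    simp only [Prod.mk.injEq] at h ⊢
    omega
  have i1 : Function.Injective fun p : ℤ × ℤ => (p.2 + 2 * p.1 + 1, p.2) := by
    rintro ⟨a, b⟩ ⟨c, d⟩ h
    simp only [Prod.mk.injEq] at h ⊢
    omega
  refine ((i0.hasSum_range_iff.2 (hF.comp_injective i0).hasSum).add_isCompl ?_
    (i1.hasSum_range_iff.2 (hF.comp_injective i1).hasSum)).tsum_eq
  refine IsCompl.of_eq ?_ ?_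
  · ext ⟨m, n⟩
    simp only [Set.inf_eq_inter, Set.mem_inter_iff, Set.mem_range, Prod.mk.injEq, Prod.exists,
      Set.bot_eq_empty, Set.mem_empty_iff_false, iff_false]
    rintro ⟨⟨a, b, h⟩, c, d, h'⟩
    omega
  · ext ⟨m, n⟩
    simp only [Set.sup_eq_union, Set.mem_union, Set.mem_range, Prod.mk.injEq, Prod.exists,
      Set.top_eq_univ, Set.mem_univ, iff_true]
    rcases Int.even_or_odd' (m - n) with ⟨k, h | h⟩
    · exact Or.inl ⟨k, n, by omega, rfl⟩
    · exact Or.inr ⟨k, n, by omega, rfl⟩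

/-- The products `θ₃(q) θ₃(r)` and `θ₄(q) θ₄(r)` are the sum and the difference of the same two series,
taken over the pairs `(m, n)` with `m - n` even and odd respectively. -/
lemma theta_mul_theta {q r : ℝ} (hq0 : 0 < q) (hq1 : q < 1) (hr0 : 0 < r) (hr1 : r < 1) :
    theta3 q * theta3 r = ∑' p : ℤ × ℤ, q ^ ((p.2 + 2 * p.1) ^ 2) * r ^ (p.2 ^ 2) +
        ∑' p : ℤ × ℤ, q ^ ((p.2 + 2 * p.1 + 1) ^ 2) * r ^ (p.2 ^ 2) ∧
    theta4 q * theta4 r = ∑' p : ℤ × ℤ, q ^ ((p.2 + 2 * p.1) ^ 2) * r ^ (p.2 ^ 2) -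
        ∑' p : ℤ × ℤ, q ^ ((p.2 + 2 * p.1 + 1) ^ 2) * r ^ (p.2 ^ 2) := by
  have s1 := (summable_theta3 hq0 hq1).norm
  have s2 := (summable_theta3 hr0 hr1).norm
  have t1 := (summable_theta4 hq0 hq1).norm
  have t2 := (summable_theta4 hr0 hr1).norm
  constructor
  · rw [theta3, theta3, tsum_mul_tsum_of_summable_norm s1 s2,
      tsum_parity (summable_mul_of_summable_norm s1 s2)]
  · rw [theta4, theta4, tsum_mul_tsum_of_summable_norm t1 t2,
      tsum_parity (summable_mul_of_summable_norm t1 t2), sub_eq_add_neg, ← tsum_neg]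
    have hsq : ∀ n : ℤ, (-1 : ℝ) ^ n * (-1) ^ n = 1 := fun n => by
      rw [← mul_zpow]; norm_num
    have hev : ∀ n : ℤ, (-1 : ℝ) ^ (2 * n) = 1 := fun n => by
      rw [zpow_mul]; norm_num
    congr 1 <;> refine tsum_congr fun p => ?_
    · rw [zpow_add₀ (by norm_num : (-1 : ℝ) ≠ 0), hev]
      linear_combination (q ^ ((p.2 + 2 * p.1) ^ 2) * r ^ (p.2 ^ 2)) * hsq p.2
    · rw [zpow_add_one₀ (by norm_num : (-1 : ℝ) ≠ 0), zpow_add₀ (by norm_num : (-1 : ℝ) ≠ 0), hev]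
      linear_combination -(q ^ ((p.2 + 2 * p.1 + 1) ^ 2) * r ^ (p.2 ^ 2)) * hsq p.2

lemma psi_mul_psi {q r : ℝ} (hq0 : 0 < q) (hq1 : q < 1) (hr0 : 0 < r) (hr1 : r < 1) :
    psi q * psi r =
      ∑' p : ℤ × ℤ, q ^ ((p.2 + 2 * p.1) ^ 2 + (p.2 + 2 * p.1)) * r ^ (p.2 ^ 2 + p.2) +
      ∑' p : ℤ × ℤ, q ^ ((p.2 + 2 * p.1 + 1) ^ 2 + (p.2 + 2 * p.1 + 1)) * r ^ (p.2 ^ 2 + p.2) := by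
  have s1 := (summable_psi hq0 hq1).norm
  have s2 := (summable_psi hr0 hr1).norm
  rw [psi, psi, tsum_mul_tsum_of_summable_norm s1 s2,
      tsum_parity (summable_mul_of_summable_norm s1 s2)]

/-- The bijection `(a, b) ↦ (a + b, a)` of `ℤ²`. It sends `2 a + b` and `b` to the sum and the
difference of the two new coordinates, which diagonalizes `(2 a + b)² + b²`. -/
def shearEquiv : ℤ × ℤ ≃ ℤ × ℤ where
  toFun p := (p.2 + p.1, p.1)
  invFun p := (p.2, p.1 - p.2)
  left_inv p := by ext <;> simp
  right_inv p := by ext <;> simp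

/-- The affine variant `(a, b) ↦ (a, a + b + 1)`, used for the odd part of `psi q ^ 2`. -/
def shearShiftEquiv : ℤ × ℤ ≃ ℤ × ℤ where
  toFun p := (p.1, p.2 + p.1 + 1)
  invFun p := (p.1, p.2 - p.1 - 1)
  left_inv p := by ext; exacts [rfl, by dsimp; ring]
  right_inv p := by ext; exacts [rfl, by dsimp; ring]

/-- The affine bijection of `ℤ²` given by multiplication by the sixth root of unity
`(1 + √-3) / 2`: it carries `((2 M + 1) + (2 N + 1) √-3) / 2` with `M - N` odd to `m + n √-3` with
`m - n` odd, preserving the norm, where `(M, N) = (2 a + b + 1, b)` and both pairs are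
parametrized as in `tsum_parity`. -/
def rotEquiv : ℤ × ℤ ≃ ℤ × ℤ where
  toFun p := (-p.2 - 1, p.2 + p.1 + 1)
  invFun p := (p.1 + p.2, -p.1 - 1)
  left_inv p := by ext <;> dsimp <;> ring
  right_inv p := by ext <;> dsimp <;> ring

/-- The affine bijection `N ↦ -1 - N`, with `M` fixed, of the pairs `(M, N)`, in coordinates adapted
to the parity of `M - N`: it exchanges the even and the odd pairs and preserves `N² + N`. -/
def reflEquiv : ℤ × ℤ ≃ ℤ × ℤ where
  toFun p := (p.2 + p.1, -1 - p.2)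
  invFun p := (p.1 + p.2 + 1, -1 - p.2)
  left_inv p := by ext <;> dsimp <;> ring
  right_inv p := by ext <;> dsimp <;> ring

/-- The degree three modular equation in theta form. The left-hand side is twice the sum of
`q ^ (m² + 3 n²)` over `m - n` odd; since `m² + 3 n²` is the norm form of `ℤ[√-3]`, rotating by a
sixth root of unity turns this sum into half of the right-hand side. -/
lemma theta_cubic {q : ℝ} (hq0 : 0 < q) (hq1 : q < 1) :
    theta3 q * theta3 (q ^ 3) - theta4 q * theta4 (q ^ 3) = q * (psi q * psi (q ^ 3)) := by
  have hr0 : 0 < q ^ 3 := by positivity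
  have hr1 : q ^ 3 < 1 := pow_lt_one₀ hq0.le hq1 three_ne_zero
  have hq := hq0.ne'
  obtain ⟨h3, h4⟩ := theta_mul_theta hq0 hq1 hr0 hr1
  have hr : ∀ n : ℤ, (q ^ 3) ^ n = q ^ (3 * n) := fun n => by
    rw [zpow_mul]; norm_cast
  set S := ∑' p : ℤ × ℤ, q ^ ((p.2 + 2 * p.1 + 1) ^ 2) * (q ^ 3) ^ (p.2 ^ 2) with hS
  have hodd : S = q * ∑' p : ℤ × ℤ,
      q ^ ((p.2 + 2 * p.1 + 1) ^ 2 + (p.2 + 2 * p.1 + 1)) * (q ^ 3) ^ (p.2 ^ 2 + p.2) := by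
    rw [hS, ← rotEquiv.tsum_eq, ← tsum_mul_left]
    refine tsum_congr fun p => ?_
    simp only [rotEquiv, Equiv.coe_fn_mk, hr]
    rw [← zpow_add₀ hq, ← zpow_add₀ hq, ← zpow_one_add₀ hq]
    congr 1
    ring
  have heven : ∑' p : ℤ × ℤ, q ^ ((p.2 + 2 * p.1) ^ 2 + (p.2 + 2 * p.1)) *
      (q ^ 3) ^ (p.2 ^ 2 + p.2) = ∑' p : ℤ × ℤ,
      q ^ ((p.2 + 2 * p.1 + 1) ^ 2 + (p.2 + 2 * p.1 + 1)) * (q ^ 3) ^ (p.2 ^ 2 + p.2) := by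
    rw [← reflEquiv.tsum_eq (fun p : ℤ × ℤ => q ^ ((p.2 + 2 * p.1 + 1) ^ 2 + (p.2 + 2 * p.1 + 1)) *
      (q ^ 3) ^ (p.2 ^ 2 + p.2))]
    refine tsum_congr fun p => ?_
    simp only [reflEquiv, Equiv.coe_fn_mk, hr]
    rw [← zpow_add₀ hq, ← zpow_add₀ hq]
    congr 1
    ring
  rw [h3, h4, psi_mul_psi hq0 hq1 hr0 hr1, heven]
  linear_combination 2 * hodd

/-- Jacobi's identity `θ₃⁴ = θ₄⁴ + θ₂⁴`, from `θ₃(q)² ± θ₄(q)² = 2 θ₃(q²)²`, `2 θ₂(q²)²` and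
`θ₂(q)² = 2 θ₂(q²) θ₃(q²)`. -/
lemma theta_quartic {q : ℝ} (hq0 : 0 < q) (hq1 : q < 1) :
    theta3 q ^ 4 - theta4 q ^ 4 = q * psi q ^ 4 := by
  have hr0 : 0 < q ^ 2 := by positivity
  have hr1 : q ^ 2 < 1 := pow_lt_one₀ hq0.le hq1 two_ne_zero
  have hq := hq0.ne'
  obtain ⟨h3, h4⟩ := theta_mul_theta hq0 hq1 hq0 hq1
  have hr : ∀ n : ℤ, (q ^ 2) ^ n = q ^ (2 * n) := fun n => by
    rw [zpow_mul]; norm_cast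
  have s3 := (summable_theta3 hr0 hr1).norm
  have sp := (summable_psi hr0 hr1).norm
  have e1 : ∑' p : ℤ × ℤ, q ^ ((p.2 + 2 * p.1) ^ 2) * q ^ (p.2 ^ 2) =
      theta3 (q ^ 2) * theta3 (q ^ 2) := by
    rw [theta3, tsum_mul_tsum_of_summable_norm s3 s3]
    symm
    rw [← shearEquiv.tsum_eq]
    refine tsum_congr fun p => ?_
    simp only [shearEquiv, Equiv.coe_fn_mk, hr]
    rw [← zpow_add₀ hq, ← zpow_add₀ hq]
    congr 1
    ring
  have e2 : ∑' p : ℤ × ℤ, q ^ ((p.2 + 2 * p.1 + 1) ^ 2) * q ^ (p.2 ^ 2) =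
      q * (psi (q ^ 2) * psi (q ^ 2)) := by
    rw [psi, tsum_mul_tsum_of_summable_norm sp sp, ← tsum_mul_left]
    symm
    rw [← shearEquiv.tsum_eq]
    refine tsum_congr fun p => ?_
    simp only [shearEquiv, Equiv.coe_fn_mk, hr]
    rw [← zpow_add₀ hq, ← zpow_add₀ hq, ← zpow_one_add₀ hq]
    congr 1
    ring
  have e3 : ∑' p : ℤ × ℤ, q ^ ((p.2 + 2 * p.1) ^ 2 + (p.2 + 2 * p.1)) * q ^ (p.2 ^ 2 + p.2) =
      psi (q ^ 2) * theta3 (q ^ 2) := by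
    rw [psi, theta3, tsum_mul_tsum_of_summable_norm sp s3]
    symm
    rw [← shearEquiv.tsum_eq]
    refine tsum_congr fun p => ?_
    simp only [shearEquiv, Equiv.coe_fn_mk, hr]
    rw [← zpow_add₀ hq, ← zpow_add₀ hq]
    congr 1
    ring
  have e4 : ∑' p : ℤ × ℤ, q ^ ((p.2 + 2 * p.1 + 1) ^ 2 + (p.2 + 2 * p.1 + 1)) *
      q ^ (p.2 ^ 2 + p.2) = psi (q ^ 2) * theta3 (q ^ 2) := by
    rw [psi, theta3, tsum_mul_tsum_of_summable_norm sp s3]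
    symm
    rw [← shearShiftEquiv.tsum_eq]
    refine tsum_congr fun p => ?_
    simp only [shearShiftEquiv, Equiv.coe_fn_mk, hr]
    rw [← zpow_add₀ hq, ← zpow_add₀ hq]
    congr 1
    ring
  have h5 := psi_mul_psi hq0 hq1 hq0 hq1
  rw [e1, e2] at h3 h4
  rw [e3, e4] at h5
  calc theta3 q ^ 4 - theta4 q ^ 4 = (theta3 q * theta3 q) ^ 2 - (theta4 q * theta4 q) ^ 2 := by ring
    _ = q * (psi q * psi q) ^ 2 := by rw [h3, h4, h5]; ring
    _ = q * psi q ^ 4 := by ring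

/-! ### Product formulas and the modular equation -/

/-- The product `∏ (1 + qⁿ)` over odd `n ≥ 1`. -/
noncomputable def oddPlus (q : ℝ) : ℝ := ∏' k : ℕ, (1 + q ^ (2 * k + 1))

/-- The product `∏ (1 - qⁿ)` over odd `n ≥ 1`; up to a power of `q` this is `η(τ) / η(2τ)`. -/
noncomputable def oddMinus (q : ℝ) : ℝ := ∏' k : ℕ, (1 - q ^ (2 * k + 1))

/-- The product `∏ (1 + qⁿ)` over even `n ≥ 2`. -/
noncomputable def evenPlus (q : ℝ) : ℝ := ∏' k : ℕ, (1 + q ^ (2 * k + 2))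

lemma theta3_eq {q : ℝ} (hq0 : 0 < q) (hq1 : q < 1) :
    theta3 q = eulerProd (q ^ 2) * oddPlus q ^ 2 := by
  have h := jacobi_triple_product hq0 hq1 one_ne_zero (by simpa using summable_theta3 hq0 hq1)
  simp only [one_zpow, mul_one, inv_one] at h
  rw [theta3, h, oddPlus, sq (∏' _, _)]

lemma theta4_eq {q : ℝ} (hq0 : 0 < q) (hq1 : q < 1) :
    theta4 q = eulerProd (q ^ 2) * oddMinus q ^ 2 := by
  have h := jacobi_triple_product hq0 hq1 (by norm_num : (-1 : ℝ) ≠ 0) (summable_theta4 hq0 hq1)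
  rw [inv_neg, inv_one] at h
  simp only [mul_neg_one, ← sub_eq_add_neg] at h
  rw [theta4, h, oddMinus, sq (∏' _, _)]

lemma psi_eq {q : ℝ} (hq0 : 0 < q) (hq1 : q < 1) :
    psi q = 2 * eulerProd (q ^ 2) * evenPlus q ^ 2 := by
  have hz : ∀ n : ℤ, q ^ (n ^ 2 + n) = q ^ (n ^ 2) * q ^ n := fun n => zpow_add₀ hq0.ne' _ _
  have hs : Summable fun n : ℤ => q ^ (n ^ 2) * q ^ n := by
    simpa only [hz] using summable_psi hq0 hq1
  have h := jacobi_triple_product (z := q) hq0 hq1 hq0.ne' hs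
  have h1 : ∀ k : ℕ, q ^ (2 * k + 1) * q = q ^ (2 * k + 2) := fun k => by ring
  have h2 : ∀ k : ℕ, q ^ (2 * k + 1) * q⁻¹ = q ^ (2 * k) := fun k => by
    have := hq0.ne'
    field_simp
    ring
  simp only [h1, h2] at h
  have h3 : ∏' k : ℕ, (1 + q ^ (2 * k)) = 2 * evenPlus q := by
    have hm : Multipliable fun k : ℕ => 1 + q ^ (2 * (k + 1)) := by
      simpa using multipliable_of_geom hq0 hq1 1 (fun k => 2 * (k + 1)) (fun k => by omega)
    rw [tprod_eq_zero_mul' (f := fun k : ℕ => 1 + q ^ (2 * k)) hm]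
    norm_num [evenPlus, mul_add]
  simp only [psi, hz]
  rw [h, h3, ← evenPlus]
  ring

lemma multipliable_oddMinus {q : ℝ} (hq0 : 0 < q) (hq1 : q < 1) :
    Multipliable fun k : ℕ => 1 - q ^ (2 * k + 1) := by
  simpa [sub_eq_add_neg] using
    multipliable_of_geom hq0 hq1 (-1) (fun k => 2 * k + 1) (fun k => by omega)

lemma eulerProd_eq {q : ℝ} (hq0 : 0 < q) (hq1 : q < 1) :
    eulerProd q = eulerProd (q ^ 2) * oddMinus q := by
  have hm := multipliable_eulerProd (x := q ^ 2) (by positivity)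
    (pow_lt_one₀ hq0.le hq1 two_ne_zero)
  have e : ∀ k : ℕ, 1 - (q ^ 2) ^ (k + 1) = 1 - q ^ (2 * k + 1 + 1) := fun k => by ring
  have h := tprod_even_mul_odd (f := fun k : ℕ => 1 - q ^ (k + 1)) (multipliable_oddMinus hq0 hq1)
    (hm.congr e)
  rw [eulerProd, ← h, mul_comm, eulerProd, oddMinus]
  simp only [e]

lemma oddPlus_mul_oddMinus_mul_evenPlus {q : ℝ} (hq0 : 0 < q) (hq1 : q < 1) :
    oddPlus q * oddMinus q * evenPlus q = 1 := by
  have hx0 : 0 < q ^ 2 := by positivity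
  have hx1 : q ^ 2 < 1 := pow_lt_one₀ hq0.le hq1 two_ne_zero
  have ma : Multipliable fun k : ℕ => 1 + q ^ (2 * k + 1) := by
    simpa using multipliable_of_geom hq0 hq1 1 (fun k => 2 * k + 1) (fun k => by omega)
  have mc : Multipliable fun k : ℕ => 1 + q ^ (2 * k + 2) := by
    simpa using multipliable_of_geom hq0 hq1 1 (fun k => 2 * k + 2) (fun k => by omega)
  have h1 : oddPlus q * oddMinus q = oddMinus (q ^ 2) := by
    rw [oddPlus, oddMinus, oddMinus, ← ma.tprod_mul (multipliable_oddMinus hq0 hq1)]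
    exact tprod_congr fun k => by ring
  have h2 : evenPlus q * eulerProd (q ^ 2) = eulerProd ((q ^ 2) ^ 2) := by
    rw [evenPlus, eulerProd, eulerProd, ← mc.tprod_mul (multipliable_eulerProd hx0 hx1)]
    exact tprod_congr fun k => by ring
  have h3 := eulerProd_eq hx0 hx1
  rw [← h2, ← h1] at h3
  have h4 := (eulerProd_pos hx0 hx1).ne'
  apply mul_left_cancel₀ h4
  linear_combination -h3

lemma oddMinus_pos {q : ℝ} (hq0 : 0 < q) (hq1 : q < 1) : 0 < oddMinus q := by
  have h := eulerProd_eq hq0 hq1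
  have h1 := eulerProd_pos hq0 hq1
  have h2 := eulerProd_pos (x := q ^ 2) (by positivity) (pow_lt_one₀ hq0.le hq1 two_ne_zero)
  rw [h] at h1
  exact (mul_pos_iff_of_pos_left h2).1 h1

lemma product_quartic {q : ℝ} (hq0 : 0 < q) (hq1 : q < 1) :
    oddPlus q ^ 8 - oddMinus q ^ 8 = 16 * q * evenPlus q ^ 8 := by
  have h := theta_quartic hq0 hq1
  have hE := (eulerProd_pos (x := q ^ 2) (by positivity) (pow_lt_one₀ hq0.le hq1 two_ne_zero)).ne'
  rw [theta3_eq hq0 hq1, theta4_eq hq0 hq1, psi_eq hq0 hq1] at h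
  apply mul_left_cancel₀ (pow_ne_zero 4 hE)
  linear_combination h

lemma product_cubic {q : ℝ} (hq0 : 0 < q) (hq1 : q < 1) :
    oddPlus q ^ 2 * oddPlus (q ^ 3) ^ 2 - oddMinus q ^ 2 * oddMinus (q ^ 3) ^ 2 =
      4 * q * (evenPlus q ^ 2 * evenPlus (q ^ 3) ^ 2) := by
  have h := theta_cubic hq0 hq1
  have hr0 : 0 < q ^ 3 := by positivity
  have hr1 : q ^ 3 < 1 := pow_lt_one₀ hq0.le hq1 three_ne_zero
  have hE := (eulerProd_pos (x := q ^ 2) (by positivity) (pow_lt_one₀ hq0.le hq1 two_ne_zero)).ne'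
  have hE' := (eulerProd_pos (x := (q ^ 3) ^ 2) (by positivity)
    (pow_lt_one₀ hr0.le hr1 two_ne_zero)).ne'
  rw [theta3_eq hq0 hq1, theta4_eq hq0 hq1, psi_eq hq0 hq1, theta3_eq hr0 hr1, theta4_eq hr0 hr1,
    psi_eq hr0 hr1] at h
  apply mul_left_cancel₀ (mul_ne_zero hE hE')
  linear_combination h

/-- The degree three relation between `b = oddMinus q` and `B = oddMinus (q ^ 3)`. Writing `a, c` and
`A, C` for the other two products at `q` and `q ^ 3`, it results from eliminating these four from
`a⁸ - b⁸ = 16 q c⁸`, `abc = 1`, their analogues at `q ^ 3`, and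
`(a A)² - (b B)² = 4 q (c C)²`. -/
lemma modular_equation {q : ℝ} (hq0 : 0 < q) (hq1 : q < 1) :
    q ^ 2 * oddMinus q ^ 24 + oddMinus (q ^ 3) ^ 24 =
      (oddMinus q * oddMinus (q ^ 3)) ^ 18 + 18 * q * (oddMinus q * oddMinus (q ^ 3)) ^ 12 +
        64 * q ^ 2 * (oddMinus q * oddMinus (q ^ 3)) ^ 6 := by
  have hr0 : 0 < q ^ 3 := by positivity
  have hr1 : q ^ 3 < 1 := pow_lt_one₀ hq0.le hq1 three_ne_zero
  have j1 := product_quartic hq0 hq1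
  have j3 := product_quartic hr0 hr1
  have hc := product_cubic hq0 hq1
  have p1 := oddPlus_mul_oddMinus_mul_evenPlus hq0 hq1
  have p3 := oddPlus_mul_oddMinus_mul_evenPlus hr0 hr1
  generalize oddPlus q = a at *
  generalize oddMinus q = b at *
  generalize evenPlus q = c at *
  generalize oddPlus (q ^ 3) = A at *
  generalize oddMinus (q ^ 3) = B at *
  generalize evenPlus (q ^ 3) = C at *
  obtain ⟨x, hx⟩ : ∃ x, x = b * B := ⟨_, rfl⟩
  obtain ⟨s, hs⟩ : ∃ s, s = a * A := ⟨_, rfl⟩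
  obtain ⟨r, hr⟩ : ∃ r, r = c * C := ⟨_, rfl⟩
  have hsrx : s * r * x = 1 := by
    rw [hs, hr, hx]; linear_combination (A * B * C) * p1 + p3
  have hsr : s ^ 2 - 4 * q * r ^ 2 = x ^ 2 := by
    rw [hs, hr, hx]; linear_combination hc
  have k1 : x ^ 2 * (s ^ 4 + 16 * q ^ 2 * r ^ 4) = x ^ 6 + 8 * q := by
    have : x ^ 2 * (s ^ 4 + 16 * q ^ 2 * r ^ 4) =
        x ^ 2 * (s ^ 2 - 4 * q * r ^ 2) ^ 2 + 8 * q * (s * r * x) ^ 2 := by ring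
    rw [this, hsr, hsrx]; ring
  have k2 : x ^ 4 * (s ^ 8 + 256 * q ^ 4 * r ^ 8) = x ^ 12 + 16 * q * x ^ 6 + 32 * q ^ 2 := by
    have : x ^ 4 * (s ^ 8 + 256 * q ^ 4 * r ^ 8) =
        (x ^ 2 * (s ^ 4 + 16 * q ^ 2 * r ^ 4)) ^ 2 - 32 * q ^ 2 * (s * r * x) ^ 4 := by ring
    rw [this, k1, hsrx]; ring
  have k3 : x ^ 4 * ((a ^ 8 + 16 * q * c ^ 8) * (A ^ 8 + 16 * q ^ 3 * C ^ 8)) =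
      x ^ 12 + 32 * q * x ^ 6 + 64 * q ^ 2 := by
    have h8 : (a ^ 8 - 16 * q * c ^ 8) * (A ^ 8 - 16 * q ^ 3 * C ^ 8) = x ^ 8 := by
      rw [show a ^ 8 - 16 * q * c ^ 8 = b ^ 8 by linear_combination j1,
        show A ^ 8 - 16 * q ^ 3 * C ^ 8 = B ^ 8 by linear_combination j3, hx]
      ring
    rw [hs, hr] at k2
    linear_combination 2 * k2 - x ^ 4 * h8
  have k4 : b ^ 8 * (a ^ 8 + 16 * q * c ^ 8) ^ 2 = b ^ 24 + 64 * q := by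
    have : b ^ 8 * (a ^ 8 + 16 * q * c ^ 8) ^ 2 =
        b ^ 8 * (a ^ 8 - 16 * q * c ^ 8) ^ 2 + 64 * q * (a * b * c) ^ 8 := by ring
    rw [this, p1, show a ^ 8 - 16 * q * c ^ 8 = b ^ 8 by linear_combination j1]
    ring
  have k5 : B ^ 8 * (A ^ 8 + 16 * q ^ 3 * C ^ 8) ^ 2 = B ^ 24 + 64 * q ^ 3 := by
    have : B ^ 8 * (A ^ 8 + 16 * q ^ 3 * C ^ 8) ^ 2 =
        B ^ 8 * (A ^ 8 - 16 * q ^ 3 * C ^ 8) ^ 2 + 64 * q ^ 3 * (A * B * C) ^ 8 := by ring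
    rw [this, p3, show A ^ 8 - 16 * q ^ 3 * C ^ 8 = B ^ 8 by linear_combination j3]
    ring
  have k6 : (b ^ 24 + 64 * q) * (B ^ 24 + 64 * q ^ 3) =
      (x ^ 12 + 32 * q * x ^ 6 + 64 * q ^ 2) ^ 2 := by
    rw [← k3, ← k4, ← k5, hx]; ring
  rw [← hx]
  have hx24 : x ^ 24 = b ^ 24 * B ^ 24 := by rw [hx]; ring
  apply mul_left_cancel₀ (mul_ne_zero (by norm_num : (64 : ℝ) ≠ 0) hq0.ne')
  linear_combination k6 + hx24

/-- The value of `t = g (b / B)⁶` where `g² = q` and `b²⁴ = 64 q`: the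
modular equation then reduces to
`(t² - 10 t + 1) (t + 1)² = 0`, and `t > 0`. -/
lemma real_value {q g : ℝ} (hg0 : 0 < g) (hgq : g ^ 2 = q) (hq1 : q < 1)
    (hb : oddMinus q ^ 24 = 64 * q) {t : ℝ}
    (ht : t = g * (oddMinus q / oddMinus (q ^ 3)) ^ 6) : 0 < t ∧ t + 1 / t = 10 := by
  have hq0 : 0 < q := by rw [← hgq]; positivity
  have hm := modular_equation hq0 hq1
  have b0 := oddMinus_pos hq0 hq1
  have B0 := oddMinus_pos (q := q ^ 3) (by positivity) (pow_lt_one₀ hq0.le hq1 three_ne_zero)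
  generalize oddMinus q = b at *
  generalize oddMinus (q ^ 3) = B at *
  have ht0 : 0 < t := by rw [ht]; positivity
  refine ⟨ht0, ?_⟩
  have hb12 : b ^ 12 = 8 * g := by
    refine (pow_left_inj₀ (by positivity) (by positivity) two_ne_zero).1 ?_
    rw [mul_pow, hgq, ← pow_mul, hb]; norm_num
  have hB : t * B ^ 6 = g * b ^ 6 := by rw [ht]; field_simp
  -- The modular equation is multiplied by `t ^ 4`, then `t * B ^ 6` and `b ^ 12` are eliminated.
  have h4 : (64 * g ^ 6) * ((t ^ 2 - 10 * t + 1) * (t + 1) ^ 2) = 0 := by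
    have h : q ^ 2 * t ^ 4 * b ^ 24 + (t * B ^ 6) ^ 4 =
        t * b ^ 18 * (t * B ^ 6) ^ 3 + 18 * q * t ^ 2 * b ^ 12 * (t * B ^ 6) ^ 2 +
          64 * q ^ 2 * t ^ 3 * b ^ 6 * (t * B ^ 6) := by
      linear_combination t ^ 4 * hm
    rw [hB, ← hgq] at h
    have h' : g ^ 4 * t ^ 4 * (b ^ 12) ^ 2 + g ^ 4 * (b ^ 12) ^ 2 =
        t * g ^ 3 * (b ^ 12) ^ 3 + 18 * g ^ 4 * t ^ 2 * (b ^ 12) ^ 2 +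
          64 * g ^ 5 * t ^ 3 * b ^ 12 := by linear_combination h
    rw [hb12] at h'
    linear_combination h'
  have h5 : t ^ 2 - 10 * t + 1 = 0 := by
    have h6 : (t + 1) ^ 2 ≠ 0 := by positivity
    have h7 : 64 * g ^ 6 ≠ 0 := by positivity
    simpa [h6, h7, hg0.ne'] using h4
  field_simp
  linear_combination h5

/-! ### Eta values on the imaginary axis -/

lemma ofReal_eulerProd {x : ℝ} (hx0 : 0 < x) (hx1 : x < 1) :
    ((eulerProd x : ℝ) : ℂ) = ∏' k : ℕ, (1 - (x : ℂ) ^ (k + 1)) := by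
  have h := (multipliable_eulerProd hx0 hx1).hasProd.map Complex.ofRealHom
    Complex.continuous_ofReal
  rw [← eulerProd] at h
  simpa [Function.comp_def] using h.tprod_eq.symm

lemma dedekindEta_mul_I {y e : ℝ} (hy : 0 < y) (he : e = Real.exp (-(π * y / 12))) :
    dedekindEta (y * Complex.I) = ((e * eulerProd (e ^ 24) : ℝ) : ℂ) := by
  have he0 : 0 < e := he ▸ Real.exp_pos _
  have he1 : e < 1 := by rw [he, Real.exp_lt_one_iff]; have := Real.pi_pos; simp; positivity
  have hI := Complex.I_mul_I
  rw [dedekindEta, Complex.ofReal_mul, ofReal_eulerProd (by positivity)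
    (pow_lt_one₀ he0.le he1 (by norm_num))]
  congr 1
  · rw [he, Complex.ofReal_exp]
    congr 1
    push_cast
    linear_combination (π * y / 12 : ℂ) * hI
  · refine tprod_congr fun n => ?_
    rw [he, Complex.ofReal_pow, Complex.ofReal_exp, ← pow_mul, ← Complex.exp_nat_mul]
    congr 2
    push_cast
    linear_combination (2 * π * (n + 1) * y : ℂ) * hI

lemma dedekindEta_eq_eta (z : ℂ) : dedekindEta z = ModularForm.eta z := by
  simp only [dedekindEta, ModularForm.eta, ModularForm.eta_q_eq_cexp, Function.Periodic.qParam]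
  congr 2
  push_cast
  ring

/-- The inversion formula `η(-1/z)²⁴ = z¹² η(z)²⁴`. -/
lemma dedekindEta_neg_inv_pow {z : ℂ} (hz : 0 < z.im) :
    dedekindEta (-1 / z) ^ 24 = z ^ 12 * dedekindEta z ^ 24 := by
  have h := ModularForm.eta_comp_eq_csqrt_I_inv hz
  simp only [Function.comp_apply, Pi.smul_apply, Pi.mul_apply, smul_eq_mul] at h
  have hs : ∀ w : ℂ, Complex.sqrt w ^ 24 = w ^ 12 := fun w => by
    rw [show (24 : ℕ) = 2 * 12 by norm_num, pow_mul]
    congr 1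
    simp [Complex.sqrt]
  rw [dedekindEta_eq_eta, dedekindEta_eq_eta, h, mul_pow, mul_pow, inv_pow, hs, hs,
    show Complex.I ^ 12 = (Complex.I ^ 4) ^ 3 by ring, Complex.I_pow_four]
  simp

theorem t_plus_inv_t_eq_ten (τ : ℂ) (hτ : τ = Complex.I / Real.sqrt 2) (t : ℂ)
    (ht : t = ((dedekindEta τ * dedekindEta (6 * τ)) /
      (dedekindEta (2 * τ) * dedekindEta (3 * τ))) ^ 6) :
    t + 1 / t = 10 := by
  obtain ⟨y, hy⟩ : ∃ y : ℝ, y = (Real.sqrt 2)⁻¹ := ⟨_, rfl⟩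
  have hy0 : 0 < y := by rw [hy]; positivity
  have hy2 : y ^ 2 = 1 / 2 := by rw [hy, inv_pow, Real.sq_sqrt (by norm_num)]; norm_num
  have hy2' : (y : ℂ) ^ 2 = 1 / 2 := by
    rw [← Complex.ofReal_pow, hy2]; norm_num
  have hτy : τ = y * Complex.I := by rw [hτ, hy]; push_cast; ring
  obtain ⟨e, he⟩ : ∃ e : ℝ, e = Real.exp (-(π * y / 12)) := ⟨_, rfl⟩
  obtain ⟨q, hq⟩ : ∃ q : ℝ, q = e ^ 24 := ⟨_, rfl⟩
  have he0 : 0 < e := he ▸ Real.exp_pos _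
  have he1 : e < 1 := by rw [he, Real.exp_lt_one_iff]; have := Real.pi_pos; simp; positivity
  have hq0 : 0 < q := by rw [hq]; positivity
  have hq1 : q < 1 := by rw [hq]; exact pow_lt_one₀ he0.le he1 (by norm_num)
  have hr0 : 0 < q ^ 3 := by positivity
  have hr1 : q ^ 3 < 1 := pow_lt_one₀ hq0.le hq1 three_ne_zero
  have heta : ∀ k : ℕ, 0 < k →
      dedekindEta (k * τ) = ((e ^ k * eulerProd (q ^ k) : ℝ) : ℂ) := fun k hk => by
    have h := dedekindEta_mul_I (y := k * y) (e := e ^ k) (by positivity)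
      (by rw [he, ← Real.exp_nat_mul]; congr 1; ring)
    rw [← pow_mul, mul_comm k 24, pow_mul, ← hq] at h
    rw [← h, hτy]
    congr 1
    push_cast
    ring
  have h1 := heta 1 (by norm_num)
  have h2 := heta 2 (by norm_num)
  have h3 := heta 3 (by norm_num)
  have h6 := heta 6 (by norm_num)
  norm_num only [Nat.cast_one, Nat.cast_ofNat, one_mul, pow_one] at h1 h2 h3 h6
  have E2 := eulerProd_pos (x := q ^ 2) (by positivity) (pow_lt_one₀ hq0.le hq1 two_ne_zero)
  have E6 := eulerProd_pos (x := q ^ 6) (by positivity) (pow_lt_one₀ hq0.le hq1 (by norm_num))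
  have E1 := eulerProd_eq hq0 hq1
  have E3 := eulerProd_eq hr0 hr1
  rw [← pow_mul] at E3
  -- The point `τ` satisfies `-1 / τ = 2 τ`, so inversion determines `η(τ) / η(2τ)`.
  have hb : oddMinus q ^ 24 = 64 * q := by
    have hS := dedekindEta_neg_inv_pow (z := τ) (by simp [hτy, hy0])
    have hinv : -1 / τ = 2 * τ := by
      have : τ ≠ 0 := by simp [hτy, hy0.ne']
      field_simp
      rw [hτy, mul_pow, Complex.I_sq, hy2']
      norm_num
    have hτ12 : τ ^ 12 = ((1 / 64 : ℝ) : ℂ) := by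
      rw [show τ ^ 12 = (τ ^ 2) ^ 6 by ring, hτy, mul_pow, Complex.I_sq, hy2']
      norm_num
    rw [hinv, hτ12, h1, h2, E1] at hS
    have hR : (e ^ 2 * eulerProd (q ^ 2)) ^ 24 =
        1 / 64 * (e * (eulerProd (q ^ 2) * oddMinus q)) ^ 24 := by exact_mod_cast hS
    apply mul_left_cancel₀ (pow_ne_zero 24 (mul_ne_zero he0.ne' E2.ne'))
    linear_combination -64 * hR - 64 * (e * eulerProd (q ^ 2)) ^ 24 * hq
  have ht' : t = ((e ^ 12 * (oddMinus q / oddMinus (q ^ 3)) ^ 6 : ℝ) : ℂ) := by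
    rw [ht, h1, h2, h3, h6, E1, E3]
    norm_cast
    have := oddMinus_pos hr0 hr1
    field_simp
  obtain ⟨-, h⟩ := real_value (g := e ^ 12) (by positivity) (by rw [hq]; ring) hq1 hb rfl
  rw [ht']
  exact_mod_cast congrArg Complex.ofReal h
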